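/- arXiv:2305.17599 — 2 statements merged into one kernel-verified Lean document; each statement's English description precedes it below -/
import Mathlib

section
/- Fix γ₋, γ₊, C₋, C₊ and λ > 0. For every ε > 0 set j₀(ε) = 2γ₊C₊/(ε·γ₋·C₋). Then for all integers i, j, and all k such that j ≥ j₀(ε) and 0 ≤ i < i + j ≤ q_k − 1, and for every x in the circle, the ordered eigenvalues of the periodic restriction H̃_{q_k}(x) satisfy μ̃_{i+j}(x) − μ̃_i(x) ≥ λ·γ₋·C₋·(1 − ε)·j/q_k. -/
/-!
Write `n = q_k` and let `φ` be the distribution function of `ν`; in the coordinate `φ` the map `T`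
is the rotation by `α` (`exists_conjugacy`), so the orbit of `x` becomes `fract (θ + l α)`.
Since `|α - p / n| < 1 / n ^ 2` with `p` prime to `n` (`cf_approx`), there is a cyclic time shift
`l ↦ l + m` modulo `n` with `p m ≡ j`, which moves every orbit point forward in `[0, 1)` by a
`ν`-measure greater than `(j - 1) / n`, except for exactly `j` points that wrap around
(`exists_shift_comb`).

The periodic matrix `H̃_n(x)` is unchanged by a cyclic relabelling of the sites apart from its
diagonal (`HPer_shift`). Hence the relabelled matrix has the same spectrum, while off the `j`
exceptional sites its diagonal exceeds the original one by at least `λ γ₋ C₋ (j - 1) / n`, by the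
lower Lipschitz bounds on `f` and on the inverse of `φ`. A perturbation carried by `j` sites moves
the ordering of the eigenvalues by at most `j` places (`weyl_type`), so
`μ̃_{i+j} - μ̃_i ≥ λ γ₋ C₋ (j - 1) / n`. Finally `j ≥ j₀(ε)` forces `ε j ≥ 2`, because
`γ₋ ≤ γ₊` and `C₋ ≤ C₊`, and so `j - 1 ≥ (1 - ε) j`.
-/

open MeasureTheory Polynomial Filter

noncomputable section

attribute [local instance] Matrix.normedAddCommGroup

/-- Dirichlet restriction `H_n(x)` of the Schrödinger operator with potential
`n ↦ λ f (T^n x)` to `[0, n-1]`: tridiagonal with diagonal `λ f (T^j x)` and `1`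
on the two off-diagonals. -/
def HDir (lam : ℝ) (f : ℝ → ℝ) (T : Equiv.Perm ℝ) (x : ℝ) (n : ℕ) :
    Matrix (Fin n) (Fin n) ℝ :=
  Matrix.of fun i j : Fin n =>
    (if i = j then lam * f ((T ^ (i : ℕ)) x) else 0) +
    (if (i : ℕ) + 1 = (j : ℕ) ∨ (j : ℕ) + 1 = (i : ℕ) then 1 else 0)

/-- Periodic restriction `H̃_n(x)`: the Dirichlet restriction with additional
entries `1` in the corners `(0, n-1)` and `(n-1, 0)`. -/
def HPer (lam : ℝ) (f : ℝ → ℝ) (T : Equiv.Perm ℝ) (x : ℝ) (n : ℕ) :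
    Matrix (Fin n) (Fin n) ℝ :=
  HDir lam f T x n +
    Matrix.of (fun i j : Fin n =>
      if ((i : ℕ) = 0 ∧ (j : ℕ) = n - 1) ∨ ((i : ℕ) = n - 1 ∧ (j : ℕ) = 0) then (1 : ℝ) else 0)

/-- `P_n(x,E) = det (H_n(x) - E)`. -/
def Pdet (lam : ℝ) (f : ℝ → ℝ) (T : Equiv.Perm ℝ) (x E : ℝ) (n : ℕ) : ℝ :=
  (HDir lam f T x n - E • (1 : Matrix (Fin n) (Fin n) ℝ)).det

/-- `P_n(x,E)` with integer index, with the conventions `P_0 = 1` and `P_n = 0` for `n < 0`. -/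
def PdetI (lam : ℝ) (f : ℝ → ℝ) (T : Equiv.Perm ℝ) (x E : ℝ) (n : ℤ) : ℝ :=
  if 0 ≤ n then Pdet lam f T x E n.toNat else 0

/-- `P̃_n(x,E) = det (H̃_n(x) - E)`. -/
def PtildeDet (lam : ℝ) (f : ℝ → ℝ) (T : Equiv.Perm ℝ) (x E : ℝ) (n : ℕ) : ℝ :=
  (HPer lam f T x n - E • (1 : Matrix (Fin n) (Fin n) ℝ)).det

/-- One-step transfer matrix `A_i(x,E)`. -/
def transferA (lam : ℝ) (f : ℝ → ℝ) (T : Equiv.Perm ℝ) (E x : ℝ) (i : ℕ) :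
    Matrix (Fin 2) (Fin 2) ℝ :=
  !![E - lam * f ((T ^ i) x), -1; 1, 0]

/-- `n`-step transfer matrix `M_n(x,E) = A_{n-1} ⋯ A_0`. -/
def transferM (lam : ℝ) (f : ℝ → ℝ) (T : Equiv.Perm ℝ) (E x : ℝ) :
    ℕ → Matrix (Fin 2) (Fin 2) ℝ
  | 0 => 1
  | m + 1 => transferA lam f T E x m * transferM lam f T E x m

/-- Dirichlet restriction `H_{[a, a+m-1]}(x)` of the operator to the integer
interval starting at `a : ℤ` of length `m`. -/
def HBox (lam : ℝ) (f : ℝ → ℝ) (T : Equiv.Perm ℝ) (x : ℝ) (a : ℤ) (m : ℕ) :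
    Matrix (Fin m) (Fin m) ℝ :=
  Matrix.of fun i j : Fin m =>
    (if i = j then lam * f ((T ^ (a + ((i : ℕ) : ℤ))) x) else 0) +
    (if (i : ℕ) + 1 = (j : ℕ) ∨ (j : ℕ) + 1 = (i : ℕ) then 1 else 0)

/-- Green function `G_{x,E,[a,a+m-1]} = (H_{[a,a+m-1]}(x) - E)⁻¹`. -/
def GBox (lam : ℝ) (f : ℝ → ℝ) (T : Equiv.Perm ℝ) (x E : ℝ) (a : ℤ) (m : ℕ) :
    Matrix (Fin m) (Fin m) ℝ :=
  (HBox lam f T x a m - E • (1 : Matrix (Fin m) (Fin m) ℝ))⁻¹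

/-- A point `n : ℤ` is `(x, c, qk)`-regular: there is an interval `[a, b]` of length
`qk` (`b = a + qk - 1`) containing `n` with `|n - a| ≥ qk/5`, `|n - b| ≥ qk/5` and
`|G(a,n)| ≤ e^{-c|n-a|}`, `|G(n,b)| ≤ e^{-c|n-b|}`. -/
def RegularPt (lam : ℝ) (f : ℝ → ℝ) (T : Equiv.Perm ℝ) (x E c : ℝ) (qk : ℕ) (n : ℤ) : Prop :=
  ∃ (a : ℤ) (i0 i j : Fin qk),
    (i0 : ℕ) = 0 ∧ (j : ℕ) = qk - 1 ∧ n = a + ((i : ℕ) : ℤ) ∧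
    (qk : ℝ) / 5 ≤ ((i : ℕ) : ℝ) ∧ (qk : ℝ) / 5 ≤ ((j : ℕ) : ℝ) - ((i : ℕ) : ℝ) ∧
    |GBox lam f T x E a qk i0 i| ≤ Real.exp (-c * ((i : ℕ) : ℝ)) ∧
    |GBox lam f T x E a qk i j| ≤ Real.exp (-c * (((j : ℕ) : ℝ) - ((i : ℕ) : ℝ)))

/-- The `ν`-measure of the positively oriented arc of the circle `ℝ/ℤ` from `u` to `v`
(computed for a `1`-periodic measure `ν` on `ℝ`). -/
def arcMeasure (ν : Measure ℝ) (u v : ℝ) : ℝ :=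
  (ν (Set.Icc u (u + Int.fract (v - u)))).toReal

/-- The `ν`-measure of the smaller of the two complementary arcs between `u` and `v`. -/
def arcDist (ν : Measure ℝ) (u v : ℝ) : ℝ :=
  min (arcMeasure ν u v) (arcMeasure ν v u)

/-- The measure of the gap of the orbit point `T^j x` in the partition of the circle
by `x, Tx, …, T^{qk-1}x`: the measure of the positively oriented arc from `T^j x` to the
closest (in the positive direction) other orbit point. -/
def gapMeas (ν : Measure ℝ) (T : Equiv.Perm ℝ) (x : ℝ) (qk : ℕ) (j : ℕ) : ℝ :=
  sInf ((fun j' : ℕ => arcMeasure ν ((T ^ j) x) ((T ^ j') x)) '' {j' | j' < qk ∧ j' ≠ j})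

/-- `β(α) = limsup_k (ln q_{k+1}) / q_k` computed from the sequence of
continued-fraction denominators. -/
def cfBeta (q : ℕ → ℕ) : ℝ :=
  Filter.limsup (fun k : ℕ => Real.log (q (k + 1) : ℝ) / (q k : ℝ)) Filter.atTop


/-! ### Convergents of the rotation number -/

theorem cf_int (α : ℝ) (n : ℕ) : ∃ a b : ℤ,
    (GenContFract.of α).contsAux n = ⟨(a : ℝ), (b : ℝ)⟩ := by
  induction n using Nat.strong_induction_on with
  | _ n IH =>
    match n, IH with
    | 0, _ => exact ⟨1, 0, by simp [GenContFract.contsAux]⟩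
    | 1, _ => exact ⟨⌊α⌋, 1, by simp [GenContFract.contsAux, GenContFract.of_h_eq_floor]⟩
    | n + 2, IH =>
      obtain ⟨a₁, b₁, h₁⟩ := IH n (by omega)
      obtain ⟨a₂, b₂, h₂⟩ := IH (n + 1) (by omega)
      rcases hs : (GenContFract.of α).s.get? n with _ | gp
      · refine ⟨a₂, b₂, ?_⟩
        rw [← h₂]
        exact GenContFract.contsAux_stable_step_of_terminated hs
      · obtain ⟨ha, z, hz⟩ := GenContFract.of_partNum_eq_one_and_exists_int_partDen_eq hs
        refine ⟨z * a₂ + a₁, z * b₂ + b₁, ?_⟩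
        rw [GenContFract.contsAux_recurrence hs h₁ h₂, ha, hz]
        push_cast
        simp

/-- The denominator `q` of a convergent of an irrational `α` comes with an integer `p` prime to it
(through a Bézout relation, read off from the determinant formula) such that
`|α - p / q| < 1 / q ^ 2`. The inequality is strict because equality would make `α` rational. -/
theorem cf_approx (α : ℝ) (hα : Irrational α) (k q : ℕ) (hq : 0 < q)
    (hqk : (q : ℝ) = (GenContFract.of α).dens k) :
    ∃ p u v : ℤ, p * u + q * v = 1 ∧ |α - p / q| < 1 / (q : ℝ) ^ 2 := by
  have hnt : ¬ (GenContFract.of α).TerminatedAt k := by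
    intro h
    obtain ⟨r, hr⟩ := (GenContFract.terminates_iff_rat α).1 ⟨k, h⟩
    exact hα ⟨r, hr.symm⟩
  have hdet := SimpContFract.determinant (s := SimpContFract.of α) (n := k) hnt
  obtain ⟨p, b, h₁⟩ := cf_int α (k + 1)
  obtain ⟨p', q', h₂⟩ := cf_int α (k + 1 + 1)
  have hp : (GenContFract.of α).nums k = p := by
    rw [GenContFract.num_eq_conts_a, GenContFract.nth_cont_eq_succ_nth_contAux, h₁]
  have hp' : (GenContFract.of α).nums (k + 1) = p' := by
    rw [GenContFract.num_eq_conts_a, GenContFract.nth_cont_eq_succ_nth_contAux, h₂]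
  have hq' : (GenContFract.of α).dens (k + 1) = q' := by
    rw [GenContFract.den_eq_conts_b, GenContFract.nth_cont_eq_succ_nth_contAux, h₂]
  have hqR : (0 : ℝ) < q := by exact_mod_cast hq
  change (GenContFract.of α).nums k * (GenContFract.of α).dens (k + 1) -
    (GenContFract.of α).dens k * (GenContFract.of α).nums (k + 1) = _ at hdet
  rw [hp, hp', hq', ← hqk] at hdet
  have hdet' : p * q' - q * p' = (-1) ^ (k + 1) := by exact_mod_cast hdet
  refine ⟨p, (-1) ^ (k + 1) * q', -(-1) ^ (k + 1) * p', ?_, ?_⟩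
  · have : ((-1 : ℤ) ^ (k + 1)) * (-1) ^ (k + 1) = 1 := by
      rw [← mul_pow]; simp
    linear_combination (-1) ^ (k + 1) * hdet' + this
  · have h := GenContFract.abs_sub_convs_le hnt
    rw [GenContFract.conv_eq_num_div_den, hp, ← hqk] at h
    have hmono : (q : ℝ) ≤ (GenContFract.of α).dens (k + 1) := hqk ▸ GenContFract.of_den_mono
    refine lt_of_le_of_ne (h.trans ?_) ?_
    · rw [sq]
      gcongr
    · intro he
      have hrat : ∀ r : ℚ, α ≠ r := fun r hr => hα ⟨r, hr.symm⟩
      rcases abs_choice (α - p / q) with hc | hc <;> rw [hc] at he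
      · exact hrat (p / q + 1 / q ^ 2) (by push_cast; linarith)
      · exact hrat (p / q - 1 / q ^ 2) (by push_cast; linarith)

/-! ### Straightening the circle map -/

/-- The distribution function `φ` of `ν`, normalised by `φ 0 = 0`, is a bi-Lipschitz coordinate in
which `T` is the translation by `α`. The translation length equals `α` because `φ` stays within
bounded distance of the identity, so both compute the same rotation number. -/
theorem exists_conjugacy (T : Equiv.Perm ℝ) (ν : Measure ℝ) (Cm Cp α : ℝ)
    (hTmono : StrictMono ⇑T)
    (hrot : Filter.Tendsto (fun m : ℕ => (T ^ m) 0 / (m : ℝ)) Filter.atTop (nhds α))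
    (hCm : 0 < Cm)
    (hνprob : ν (Set.Ico (0 : ℝ) 1) = 1)
    (hνinv : MeasureTheory.Measure.map (⇑T) ν = ν)
    (hνper : MeasureTheory.Measure.map (fun t : ℝ => t + 1) ν = ν)
    (hcomp : ∀ u v : ℝ, u ≤ v → v ≤ u + 1 →
      Cm * (ν (Set.Icc u v)).toReal ≤ v - u ∧ v - u ≤ Cp * (ν (Set.Icc u v)).toReal) :
    ∃ φ : ℝ → ℝ, φ 0 = 0 ∧ Monotone φ ∧ (∀ (t : ℝ) (z : ℤ), φ (t + z) = φ t + z) ∧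
      (∀ (m : ℕ) (t : ℝ), φ ((T ^ m) t) = φ t + m * α) ∧
      ∀ u v, u ≤ v → v ≤ u + 1 → Cm * (φ v - φ u) ≤ v - u ∧ v - u ≤ Cp * (φ v - φ u) := by
  -- An arc of infinite measure would have `toReal` equal to `0`, against the upper comparison.
  have hfin : ∀ u v : ℝ, u < v → v ≤ u + 1 → ν (Set.Icc u v) ≠ ⊤ := by
    intro u v huv hv htop
    have := (hcomp u v huv.le hv).2
    rw [htop] at this
    simp at this
    linarith
  have hlf : IsLocallyFiniteMeasure ν := ⟨fun t =>
    ⟨Set.Icc (t - 1 / 2) (t + 1 / 2), Icc_mem_nhds (by linarith) (by linarith),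
      (hfin _ _ (by linarith) (by linarith)).lt_top⟩⟩
  have hna : NullSingletonClass ν := ⟨fun t => by
    have h := (hcomp t t le_rfl (by linarith)).1
    rw [Set.Icc_self, sub_self] at h
    have hz : (ν {t}).toReal = 0 :=
      le_antisymm (nonpos_of_mul_nonpos_right h hCm) ENNReal.toReal_nonneg
    exact ((ENNReal.toReal_eq_zero_iff _).1 hz).resolve_right
      (isCompact_singleton.measure_lt_top).ne⟩
  let φ : ℝ → ℝ := fun t => ∫ _s in (0 : ℝ)..t, (1 : ℝ) ∂ν
  have hint : ∀ a b : ℝ, IntervalIntegrable (fun _ => (1 : ℝ)) ν a b := fun a b =>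
    intervalIntegrable_const
  have hφ : ∀ u v, u ≤ v → φ v - φ u = (ν (Set.Ioc u v)).toReal := by
    intro u v huv
    have := intervalIntegral.integral_add_adjacent_intervals (hint 0 u) (hint u v)
    have h2 : ∫ _s in u..v, (1 : ℝ) ∂ν = (ν (Set.Ioc u v)).toReal := by
      rw [intervalIntegral.integral_of_le huv]
      simp [Measure.real]
    rw [← h2]
    simp only [φ]
    linarith
  have hmono : Monotone φ := fun u v huv => by
    have := hφ u v huv
    have h2 : 0 ≤ (ν (Set.Ioc u v)).toReal := ENNReal.toReal_nonneg
    linarith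
  have h0 : φ 0 = 0 := by simp [φ]
  have h1 : φ 1 = 1 := by
    have := hφ 0 1 zero_le_one
    rw [← measure_congr (Ico_ae_eq_Ioc (μ := ν)), hνprob, h0] at this
    simpa using this
  -- Maps preserving both `ν` and the order act on `φ` by a translation.
  have hinv : ∀ g : ℝ → ℝ, StrictMono g → Measure.map g ν = ν →
      ∀ t, φ (g t) = φ t + φ (g 0) := by
    intro g hg hmap
    have key : ∀ u v, u ≤ v → φ (g v) - φ (g u) = φ v - φ u := by
      intro u v huv
      rw [hφ u v huv, hφ _ _ (hg.monotone huv)]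
      congr 1
      conv_lhs => rw [← hmap]
      rw [Measure.map_apply hg.monotone.measurable measurableSet_Ioc]
      congr 1
      ext t
      simp [hg.lt_iff_lt, hg.le_iff_le]
    intro t
    rcases le_total 0 t with h | h
    · have := key 0 t h
      rw [h0] at this; linarith
    · have := key t 0 h
      rw [h0] at this; linarith
  have hper1 : ∀ t, φ (t + 1) = φ t + 1 := by
    intro t
    have := hinv (fun t => t + 1) (fun a b hab => by simpa using hab) hνper t
    simpa [h1] using this
  have hperiodic : Function.Periodic (fun t => φ t - t) 1 := by
    intro t
    simp only [hper1]; ring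
  have hperZ : ∀ (t : ℝ) (z : ℤ), φ (t + z) = φ t + z := by
    intro t z
    have := hperiodic.int_mul z t
    simp only [mul_one] at this
    linarith
  have hTstep : ∀ t, φ (T t) = φ t + φ (T 0) := hinv T hTmono hνinv
  have hTm : ∀ (m : ℕ) (t : ℝ), φ ((T ^ m) t) = φ t + m * φ (T 0) := by
    intro m
    induction m with
    | zero => intro t; simp
    | succ m ih =>
      intro t
      rw [pow_succ, Equiv.Perm.mul_apply, ih, hTstep]
      push_cast; ring
  have hclose : ∀ t, |φ t - t| ≤ 1 := by
    intro t
    have h := hperZ (Int.fract t) ⌊t⌋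
    rw [Int.fract_add_floor] at h
    have ha : 0 ≤ φ (Int.fract t) := h0 ▸ hmono (Int.fract_nonneg t)
    have hb : φ (Int.fract t) ≤ 1 := h1 ▸ hmono (Int.fract_lt_one t).le
    have hc := Int.fract_nonneg t
    have hd := (Int.fract_lt_one t).le
    have hfl := Int.fract_add_floor t
    rw [abs_le]
    constructor <;> linarith
  have hρ : φ (T 0) = α := by
    refine tendsto_nhds_unique ?_ hrot
    rw [tendsto_iff_norm_sub_tendsto_zero]
    refine squeeze_zero' (Eventually.of_forall fun _ => norm_nonneg _) ?_
      tendsto_one_div_atTop_nhds_zero_nat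
    filter_upwards [eventually_gt_atTop 0] with m hm
    have hmR : (0 : ℝ) < m := by exact_mod_cast hm
    have h := hclose ((T ^ m) 0)
    rw [hTm, h0, zero_add] at h
    rw [Real.norm_eq_abs, show (T ^ m) 0 / (m : ℝ) - φ (T 0) =
      -((m * φ (T 0) - (T ^ m) 0) / m) by field_simp; ring, abs_neg, abs_div, abs_of_pos hmR]
    gcongr
  refine ⟨φ, h0, hmono, hperZ, hρ ▸ hTm, fun u v huv hv => ?_⟩
  rw [hφ u v huv, measure_congr (Ioc_ae_eq_Icc (μ := ν))]
  exact hcomp u v huv hv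

/-! ### Cyclic shifts of an almost rational orbit -/

/-- For `p * m ≡ j` modulo `n`, the cyclic time shift by `m` pushes all but `j` of the points
`θ + l α` of `[0, 1)` forward by more than `(j - 1) / n`. The increment is
`j / n + e l * η + w l` with `e l = (l + m) - l`, `η = α - p / n` and an integer `w l`, which
is `0` or `-1`. Summing over the cycle, both the increments and the `e l` cancel, so exactly `j`
indices have `w l = -1`. -/
theorem exists_shift_comb {n : ℕ} [NeZero n] (α θ : ℝ) (p u v : ℤ) (hbez : p * u + n * v = 1)
    (happ : |α - p / n| < 1 / (n : ℝ) ^ 2) (j : ℕ) (hj : 0 < j) (hjn : j < n) :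
    ∃ (m : Fin n) (S : Finset (Fin n)), S.card = j ∧ ∀ l ∉ S,
      ((j : ℝ) - 1) / n <
        Int.fract (θ + ((l + m : Fin n) : ℕ) * α) - Int.fract (θ + (l : ℕ) * α) := by
  have hn : 0 < n := NeZero.pos n
  have hnR : (0 : ℝ) < n := by exact_mod_cast hn
  have hnZ : (0 : ℤ) < n := by exact_mod_cast hn
  have hmod0 := Int.emod_nonneg (j * u) hnZ.ne'
  have hmodlt := Int.emod_lt_of_pos (j * u) hnZ
  let m : Fin n := ⟨((j * u) % n).toNat, by omega⟩
  have hm : ((m : ℕ) : ℤ) = (j * u) % n := Int.toNat_of_nonneg hmod0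
  set η : ℝ := α - p / n with hη
  let e : Fin n → ℤ := fun l => ((l + m : Fin n) : ℕ) - (l : ℕ)
  have hedvd : ∀ l, (n : ℤ) ∣ e l * p - j := by
    intro l
    have h1 : (n : ℤ) ∣ e l - m := by
      have : (((l + m : Fin n) : ℕ) : ℤ) = ((l : ℕ) + (m : ℕ) : ℤ) % n := by
        rw [Fin.val_add]; push_cast; rfl
      simp only [e, this]
      have := Int.emod_add_mul_ediv ((l : ℕ) + (m : ℕ) : ℤ) n
      exact ⟨-(((l : ℕ) + (m : ℕ) : ℤ) / n), by linarith⟩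
    have h2 : (n : ℤ) ∣ m - j * u := by
      rw [hm]
      have := Int.emod_add_mul_ediv (j * u : ℤ) n
      exact ⟨-((j * u : ℤ) / n), by linarith⟩
    obtain ⟨r, hr⟩ := h1
    obtain ⟨t, ht⟩ := h2
    exact ⟨(r + t) * p - j * v, by linear_combination p * hr + p * ht + j * hbez⟩
  choose g hg using hedvd
  let w : Fin n → ℤ := fun l =>
    g l - ⌊θ + ((l + m : Fin n) : ℕ) * α⌋ + ⌊θ + (l : ℕ) * α⌋
  let s : Fin n → ℝ := fun l => Int.fract (θ + (l : ℕ) * α)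
  have hs : ∀ l, s (l + m) - s l = j / n + e l * η + w l := by
    intro l
    have hgl : (e l : ℝ) * p - j = n * g l := by exact_mod_cast hg l
    have he : (e l : ℝ) = ((l + m : Fin n) : ℕ) - (l : ℕ) := by simp [e]
    have : (e l : ℝ) * (p / n) = j / n + g l := by
      field_simp
      linarith
    simp only [s, Int.fract, w]
    push_cast
    have h3 : (e l : ℝ) * α = e l * η + e l * (p / n) := by rw [hη]; ring
    rw [this, he] at h3
    rw [he]
    linarith
  have hsmall : ∀ l, |(e l : ℝ) * η| < 1 / n := by
    intro l
    have h1 : |(e l : ℝ)| ≤ n := by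
      have : |e l| ≤ n := by
        have ha : (((l + m : Fin n) : ℕ) : ℤ) < n := by exact_mod_cast (l + m).isLt
        have hb : ((l : ℕ) : ℤ) < n := by exact_mod_cast l.isLt
        have hc : (0 : ℤ) ≤ ((l + m : Fin n) : ℕ) := Int.natCast_nonneg _
        have hd : (0 : ℤ) ≤ (l : ℕ) := Int.natCast_nonneg _
        exact abs_le.2 ⟨by simp only [e]; linarith, by simp only [e]; linarith⟩
      exact_mod_cast this
    rw [abs_mul]
    calc |(e l : ℝ)| * |η| ≤ n * |η| := by gcongr
      _ < n * (1 / (n : ℝ) ^ 2) := by gcongr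
      _ = 1 / n := by field_simp
  have hj1 : (1 : ℝ) / n ≤ j / n := by
    gcongr
    exact_mod_cast hj
  have hj2 : (j : ℝ) / n + 1 / n ≤ 1 := by
    rw [← add_div, div_le_one hnR]
    exact_mod_cast hjn
  have hw : ∀ l, w l = 0 ∨ w l = -1 := by
    intro l
    have h := hs l
    have ha := abs_lt.1 (hsmall l)
    have h0 : 0 ≤ s l := Int.fract_nonneg _
    have h1 : s l < 1 := Int.fract_lt_one _
    have h0' : 0 ≤ s (l + m) := Int.fract_nonneg _
    have h1' : s (l + m) < 1 := Int.fract_lt_one _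
    have h3 : (w l : ℝ) < 1 := by linarith
    have h4 : (-2 : ℝ) < w l := by linarith
    have h5 : w l < 1 := by exact_mod_cast h3
    have h6 : -2 < w l := by exact_mod_cast h4
    omega
  have hsum0 : ∀ F : Fin n → ℝ, ∑ l, (F (l + m) - F l) = 0 := by
    intro F
    rw [Finset.sum_sub_distrib, sub_eq_zero]
    exact Equiv.sum_comp (Equiv.addRight m) F
  have hesum : ∑ l, (e l : ℝ) = 0 := by
    rw [← hsum0 fun l => ((l : ℕ) : ℝ)]
    simp [e]
  have hwsum : (j : ℝ) + ∑ l, (w l : ℝ) = 0 := by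
    have h := hsum0 s
    simp only [hs, Finset.sum_add_distrib, ← Finset.sum_mul, hesum] at h
    simp only [Finset.sum_const, Finset.card_univ, Fintype.card_fin, nsmul_eq_mul] at h
    rw [mul_div_cancel₀ _ hnR.ne'] at h
    linarith
  refine ⟨m, Finset.univ.filter (fun l => w l = -1), ?_, ?_⟩
  · have hind : ∀ l, w l = -(if w l = -1 then 1 else 0) := by
      intro l
      rcases hw l with h | h <;> simp [h]
    have h2 : (j : ℤ) + ∑ l, w l = 0 := by exact_mod_cast hwsum
    rw [Finset.sum_congr rfl fun l _ => hind l, Finset.sum_neg_distrib, Finset.sum_boole] at h2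
    push_cast at h2
    omega
  · intro l hl
    have hl0 : w l = 0 := by
      rcases hw l with h | h
      · exact h
      · exact absurd (by simpa using h) hl
    have h := hs l
    have ha := abs_lt.1 (hsmall l)
    rw [hl0] at h
    simp only [s] at h
    rw [h, sub_div]
    push_cast
    linarith

/-! ### A Weyl inequality -/

/-- Enumerating the roots of the characteristic polynomial in increasing order orders an orthonormal
eigenbasis accordingly. -/
theorem exists_sorted_eigenbasis {n : ℕ} (A : Matrix (Fin n) (Fin n) ℝ) (hA : A.IsHermitian)
    (μ : Fin n → ℝ) (hμ : Monotone μ) (hchar : A.charpoly = ∏ i, (X - C (μ i))) :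
    ∃ b : OrthonormalBasis (Fin n) ℝ (EuclideanSpace ℝ (Fin n)),
      ∀ i, A.mulVec (b i).ofLp = μ i • (b i).ofLp := by
  set e := hA.eigenvalues with he
  have hroots : ∀ g : Fin n → ℝ, (∏ i, (X - C (g i))).roots = (List.ofFn g : Multiset ℝ) := by
    intro g
    have h1 : (∏ i, (X - C (g i))) =
        (((List.ofFn g : Multiset ℝ)).map (fun a => X - C a)).prod := by
      rw [← Fin.univ_val_map, Multiset.map_map]
      rfl
    rw [h1, Polynomial.roots_multiset_prod_X_sub_C]
  have hperm : List.Perm (List.ofFn e) (List.ofFn μ) := by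
    rw [← Multiset.coe_eq_coe, ← hroots e, ← hroots μ, ← hchar, hA.charpoly_eq]
    rfl
  have hs : e ∘ Tuple.sort e = μ := by
    apply List.ofFn_injective
    exact (((Tuple.sort e).ofFn_comp_perm e).trans hperm).eq_of_sortedLE
      (Tuple.monotone_sort e).sortedLE_ofFn hμ.sortedLE_ofFn
  refine ⟨hA.eigenvectorBasis.reindex (Tuple.sort e).symm, fun i => ?_⟩
  rw [← hs]
  simpa using hA.mulVec_eigenvectorBasis (Tuple.sort e i)

/-- The quadratic form of `A` in an orthonormal eigenbasis. -/
theorem quad_eq_sum {n : ℕ} (A : Matrix (Fin n) (Fin n) ℝ) (hA : A.IsHermitian)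
    (μ : Fin n → ℝ) (b : OrthonormalBasis (Fin n) ℝ (EuclideanSpace ℝ (Fin n)))
    (hb : ∀ i, A.mulVec (b i).ofLp = μ i • (b i).ofLp) (v : EuclideanSpace ℝ (Fin n)) :
    v.ofLp ⬝ᵥ A.mulVec v.ofLp = ∑ i, μ i * (v.ofLp ⬝ᵥ (b i).ofLp) ^ 2 := by
  have hin : ∀ x y : EuclideanSpace ℝ (Fin n), inner ℝ x y = x.ofLp ⬝ᵥ y.ofLp := by
    intro x y
    rw [EuclideanSpace.inner_eq_star_dotProduct, star_trivial, dotProduct_comm]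
  have h := b.sum_inner_mul_inner v (WithLp.toLp 2 (A.mulVec v.ofLp))
  simp only [hin] at h
  rw [← h]
  refine Finset.sum_congr rfl fun i _ => ?_
  have hsym : (b i).ofLp ⬝ᵥ A.mulVec v.ofLp = A.mulVec (b i).ofLp ⬝ᵥ v.ofLp := by
    rw [Matrix.dotProduct_mulVec, ← Matrix.mulVec_transpose]
    congr 2
  rw [hsym, hb, smul_dotProduct, dotProduct_comm (b i).ofLp, smul_eq_mul]
  ring

/-- A Weyl inequality for isospectral matrices: if `B` dominates `A + c` on the vectors vanishing
on `S`, then the eigenvalue number `a + #S` exceeds the eigenvalue number `a` by at least `c`. -/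
theorem weyl_type {n : ℕ} (A B : Matrix (Fin n) (Fin n) ℝ) (hA : A.IsHermitian)
    (hB : B.IsHermitian) (μ : Fin n → ℝ) (hμ : Monotone μ)
    (hcA : A.charpoly = ∏ i, (X - C (μ i))) (hcB : B.charpoly = ∏ i, (X - C (μ i)))
    (S : Finset (Fin n)) (c : ℝ)
    (hAB : ∀ v : Fin n → ℝ, (∀ s ∈ S, v s = 0) →
      v ⬝ᵥ A.mulVec v + c * (v ⬝ᵥ v) ≤ v ⬝ᵥ B.mulVec v)
    (a b : Fin n) (hab : (a : ℕ) + S.card = b) : μ a + c ≤ μ b := by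
  obtain ⟨u, hu⟩ := exists_sorted_eigenbasis A hA μ hμ hcA
  obtain ⟨w, hw⟩ := exists_sorted_eigenbasis B hB μ hμ hcB
  -- A vector orthogonal to the eigenvectors of `A` below `a` and to those of `B` above `b`, and
  -- vanishing on `S`, satisfies `n - 1` linear conditions, so a nonzero one exists.
  let F : (Fin n → ℝ) →ₗ[ℝ] ((Finset.Iio a ⊕ Finset.Ioi b) ⊕ S → ℝ) :=
    LinearMap.pi fun t => match t with
      | .inl (.inl l) => dotProductBilin ℝ ℝ (u l).ofLp
      | .inl (.inr l) => dotProductBilin ℝ ℝ (w l).ofLp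
      | .inr s => LinearMap.proj (s : Fin n)
  have hker : F.ker ≠ ⊥ := by
    apply LinearMap.ker_ne_bot_of_finrank_lt
    simp only [Module.finrank_fintype_fun_eq_card, Fintype.card_sum, Fintype.card_coe,
      Fin.card_Iio, Fin.card_Ioi, Fintype.card_fin]
    omega
  obtain ⟨v, hv, hv0⟩ := (Submodule.ne_bot_iff _).1 hker
  have hF : ∀ t, F v t = 0 := fun t => congrFun (LinearMap.mem_ker.1 hv) t
  have h1 : ∀ l, l < a → v ⬝ᵥ (u l).ofLp = 0 := fun l hl => by
    rw [dotProduct_comm]; exact hF (.inl (.inl ⟨l, by simpa using hl⟩))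
  have h2 : ∀ l, b < l → v ⬝ᵥ (w l).ofLp = 0 := fun l hl => by
    rw [dotProduct_comm]; exact hF (.inl (.inr ⟨l, by simpa using hl⟩))
  have h3 : ∀ s ∈ S, v s = 0 := fun s hs => hF (.inr ⟨s, hs⟩)
  have hone : ∀ z : OrthonormalBasis (Fin n) ℝ (EuclideanSpace ℝ (Fin n)),
      v ⬝ᵥ v = ∑ i, (v ⬝ᵥ (z i).ofLp) ^ 2 := by
    intro z
    simpa using quad_eq_sum 1 Matrix.isHermitian_one (fun _ => 1) z (by simp) (WithLp.toLp 2 v)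
  have hqA := quad_eq_sum A hA μ u hu (WithLp.toLp 2 v)
  have hqB := quad_eq_sum B hB μ w hw (WithLp.toLp 2 v)
  have hlow : μ a * (v ⬝ᵥ v) ≤ v ⬝ᵥ A.mulVec v := by
    rw [hone u, Finset.mul_sum]
    refine le_trans (Finset.sum_le_sum fun l _ => ?_) hqA.ge
    rcases lt_or_ge l a with hl | hl
    · simp [h1 l hl]
    · exact mul_le_mul_of_nonneg_right (hμ hl) (sq_nonneg _)
  have hupp : v ⬝ᵥ B.mulVec v ≤ μ b * (v ⬝ᵥ v) := by
    rw [hone w, Finset.mul_sum]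
    refine le_trans hqB.le (Finset.sum_le_sum fun l _ => ?_)
    rcases lt_or_ge b l with hl | hl
    · simp [h2 l hl]
    · exact mul_le_mul_of_nonneg_right (hμ hl) (sq_nonneg _)
  have hpos : 0 < v ⬝ᵥ v := by
    refine lt_of_le_of_ne ?_ (fun h => hv0 (dotProduct_self_eq_zero.1 h.symm))
    exact Finset.sum_nonneg fun i _ => mul_self_nonneg _
  have := hAB v h3
  by_contra! hcon
  nlinarith

/-! ### Cyclic structure of the periodic matrix -/

/-- For `n ≥ 2` the off-diagonal part of `H̃_n` is the cyclic nearest-neighbour hopping; addition is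
taken in `Fin n`, and for `n = 2` both hops join the same pair of sites. -/
theorem HPer_apply {n : ℕ} [NeZero n] (hn : 2 ≤ n) (lam : ℝ) (f : ℝ → ℝ) (T : Equiv.Perm ℝ)
    (x : ℝ) (a b : Fin n) :
    HPer lam f T x n a b = (if a = b then lam * f ((T ^ (a : ℕ)) x) else 0) +
      ((if a + 1 = b then 1 else 0) + (if b + 1 = a then 1 else 0)) := by
  have hsucc : ∀ a b : Fin n,
      a + 1 = b ↔ ((a : ℕ) + 1 = b ∨ ((a : ℕ) = n - 1 ∧ (b : ℕ) = 0)) := by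
    intro a b
    have h1 : ((1 : Fin n) : ℕ) = 1 := by
      rw [Fin.val_one']; exact Nat.mod_eq_of_lt (by omega)
    rw [Fin.ext_iff, Fin.val_add, h1]
    have ha := a.isLt
    have hb := b.isLt
    rcases Nat.lt_or_ge ((a : ℕ) + 1) n with h | h
    · rw [Nat.mod_eq_of_lt h]; omega
    · have : (a : ℕ) + 1 = n := by omega
      rw [this, Nat.mod_self]; omega
  simp only [HPer, HDir, Matrix.add_apply, Matrix.of_apply, hsucc, add_assoc]
  congr 1
  have ha := a.isLt
  have hb := b.isLt
  split_ifs <;> first | (norm_num; done) | omega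

theorem HPer_isHermitian (n : ℕ) [NeZero n] (hn : 2 ≤ n) (lam : ℝ) (f : ℝ → ℝ)
    (T : Equiv.Perm ℝ) (x : ℝ) : (HPer lam f T x n).IsHermitian := by
  ext a b
  rw [Matrix.conjTranspose_apply, star_trivial, HPer_apply hn, HPer_apply hn]
  rw [add_comm (if b + 1 = a then (1 : ℝ) else 0)]
  congr 1
  by_cases h : a = b
  · subst h; rfl
  · rw [if_neg h, if_neg (Ne.symm h)]

/-- A cyclic relabelling of the sites changes only the diagonal of `H̃_n`. -/
theorem HPer_shift {n : ℕ} [NeZero n] (hn : 2 ≤ n) (lam : ℝ) (f : ℝ → ℝ) (T : Equiv.Perm ℝ)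
    (x : ℝ) (m : Fin n) :
    Matrix.reindex (Equiv.addRight m).symm (Equiv.addRight m).symm (HPer lam f T x n) =
      HPer lam f T x n + Matrix.diagonal fun l : Fin n =>
        lam * (f ((T ^ ((l + m : Fin n) : ℕ)) x) - f ((T ^ (l : ℕ)) x)) := by
  ext a b
  have h1 : ∀ a b : Fin n, a + m + 1 = b + m ↔ a + 1 = b := fun a b => by
    rw [add_right_comm, add_left_inj]
  simp only [Matrix.reindex_apply, Matrix.submatrix_apply, Equiv.symm_symm, Equiv.coe_addRight,
    Matrix.add_apply, HPer_apply hn, Matrix.diagonal_apply, h1, add_left_inj]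
  split_ifs <;> ring

/-! ### Separation of eigenvalues -/

/-- Vertical comparison: if `j ≥ j₀(ε) = 2γ₊C₊/(εγ₋C₋)` and
`0 ≤ i < i + j ≤ q_k − 1`, then `μ̃_{i+j}(x) − μ̃_i(x) ≥ λγ₋C₋(1 − ε) j / q_k`. -/
theorem eigenvalue_vertical_separation
    (f : ℝ → ℝ) (T : Equiv.Perm ℝ) (ν : Measure ℝ)
    (γm γp Cm Cp lam α : ℝ) (q : ℕ → ℕ) (k : ℕ) (μ : ℝ → Fin (q k) → ℝ)
    (hγm : 0 < γm) (hγp : 0 < γp) (hlam : 0 < lam)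
    (hfper : ∀ t : ℝ, f (t + 1) = f t) (hf0 : f 0 = 0)
    (hf1 : Filter.Tendsto f (nhdsWithin 1 (Set.Iio 1)) (nhds 1))
    (hfLip : ∀ u v : ℝ, 0 ≤ u → u < v → v < 1 →
      γm * (v - u) ≤ f v - f u ∧ f v - f u ≤ γp * (v - u))
    (hTmono : StrictMono ⇑T) (hTper : ∀ t : ℝ, T (t + 1) = T t + 1)
    (hαirr : Irrational α)
    (hrot : Filter.Tendsto (fun m : ℕ => (T ^ m) 0 / (m : ℝ)) Filter.atTop (nhds α))
    (hCm : 0 < Cm) (hCp : 0 < Cp)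
    (hνprob : ν (Set.Ico (0 : ℝ) 1) = 1)
    (hνinv : MeasureTheory.Measure.map (⇑T) ν = ν)
    (hνper : MeasureTheory.Measure.map (fun t : ℝ => t + 1) ν = ν)
    (hcomp : ∀ u v : ℝ, u ≤ v → v ≤ u + 1 →
      Cm * (ν (Set.Icc u v)).toReal ≤ v - u ∧ v - u ≤ Cp * (ν (Set.Icc u v)).toReal)
    (hqpos : ∀ m : ℕ, 0 < q m)
    (hqcf : ∀ m : ℕ, ((q m : ℕ) : ℝ) = (GenContFract.of α).dens m)
    (hμmono : ∀ z : ℝ, Monotone (μ z))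
    (hμeig : ∀ z : ℝ, (HPer lam f T z (q k)).charpoly = ∏ i, (X - Polynomial.C (μ z i)))
    (ε : ℝ) (hε : 0 < ε)
    (i j : ℕ) (hj0 : 2 * γp * Cp / (ε * γm * Cm) ≤ (j : ℝ)) (hjpos : 0 < j)
    (hij : i + j ≤ q k - 1) (hlt : i + j < q k)
    (x : ℝ) :
    lam * γm * Cm * (1 - ε) * (j : ℝ) / (q k : ℝ) ≤
      μ x ⟨i + j, hlt⟩ - μ x ⟨i, by omega⟩ := by
  have hn : 2 ≤ q k := by omega
  haveI : NeZero (q k) := ⟨by omega⟩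
  have hnR : (0 : ℝ) < q k := by exact_mod_cast hqpos k
  obtain ⟨p, u, v, hbez, happ⟩ := cf_approx α hαirr k (q k) (hqpos k) (hqcf k)
  obtain ⟨φ, hφ0, hφmono, hφper, hφT, hφcomp⟩ :=
    exists_conjugacy T ν Cm Cp α hTmono hrot hCm hνprob hνinv hνper hcomp
  obtain ⟨m, S, hS, hshift⟩ :=
    exists_shift_comb α (φ x) p u v hbez happ j hjpos (by omega)
  have hφ1 : φ 1 = 1 := by simpa [hφ0] using hφper 0 1
  have hfract : ∀ t, φ (Int.fract t) = Int.fract (φ t) := by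
    intro t
    have hsplit := hφper (Int.fract t) ⌊t⌋
    rw [Int.fract_add_floor] at hsplit
    symm
    rw [Int.fract_eq_iff]
    refine ⟨hφ0 ▸ hφmono (Int.fract_nonneg t), ?_, ⌊t⌋, by linarith⟩
    have hlt1 := Int.fract_lt_one t
    have hc := (hφcomp (Int.fract t) 1 hlt1.le (by linarith [Int.fract_nonneg t])).2
    rw [hφ1] at hc
    have : 0 < Cp * (1 - φ (Int.fract t)) := by linarith
    linarith [(mul_pos_iff_of_pos_left hCp).1 this]
  have hffract : ∀ t, f (Int.fract t) = f t := by
    intro t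
    have hP : Function.Periodic f 1 := hfper
    simpa using hP.sub_int_mul_eq (x := t) ⌊t⌋
  have hj1 : (0 : ℝ) ≤ (j : ℝ) - 1 := by
    have : (1 : ℝ) ≤ j := by exact_mod_cast hjpos
    linarith
  have hdiag : ∀ l ∉ S, γm * Cm * (((j : ℝ) - 1) / q k) ≤
      f ((T ^ ((l + m : Fin (q k)) : ℕ)) x) - f ((T ^ (l : ℕ)) x) := by
    intro l hl
    have h := hshift l hl
    rw [← hφT, ← hφT, ← hfract, ← hfract] at h
    rw [← hffract ((T ^ ((l + m : Fin (q k)) : ℕ)) x), ← hffract ((T ^ (l : ℕ)) x)]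
    set y' := Int.fract ((T ^ ((l + m : Fin (q k)) : ℕ)) x) with hy'
    set y := Int.fract ((T ^ (l : ℕ)) x) with hy
    have hq0 : 0 ≤ ((j : ℝ) - 1) / q k := div_nonneg hj1 hnR.le
    have hyy : y < y' := by
      by_contra! hcon
      linarith [hφmono hcon]
    have hy0 : 0 ≤ y := Int.fract_nonneg _
    have hy1 : y' < 1 := Int.fract_lt_one _
    have hc := (hφcomp y y' hyy.le (by linarith)).1
    calc γm * Cm * (((j : ℝ) - 1) / q k) ≤ γm * Cm * (φ y' - φ y) := by gcongr
      _ = γm * (Cm * (φ y' - φ y)) := by ring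
      _ ≤ γm * (y' - y) := by gcongr
      _ ≤ f y' - f y := (hfLip y y' hy0 hyy hy1).1
  have hH := HPer_isHermitian (q k) hn lam f T x
  have hweyl := weyl_type (HPer lam f T x (q k))
    (Matrix.reindex (Equiv.addRight m).symm (Equiv.addRight m).symm (HPer lam f T x (q k)))
    hH (hH.submatrix _) (μ x) (hμmono x) (hμeig x)
    ((Matrix.charpoly_reindex _ _).trans (hμeig x)) S (lam * (γm * Cm * (((j : ℝ) - 1) / q k)))
    (by
      intro w hw
      rw [HPer_shift hn, Matrix.add_mulVec, dotProduct_add]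
      refine add_le_add le_rfl ?_
      simp only [dotProduct, Matrix.mulVec_diagonal, Finset.mul_sum]
      refine Finset.sum_le_sum fun l _ => ?_
      by_cases hl : l ∈ S
      · simp [hw l hl]
      · have := mul_le_mul_of_nonneg_right
          (mul_le_mul_of_nonneg_left (hdiag l hl) hlam.le) (mul_self_nonneg (w l))
        linarith)
    ⟨i, by omega⟩ ⟨i + j, hlt⟩ (by simp [hS])
  have hγ : γm ≤ γp := by
    have h := hfLip 0 (1 / 2) le_rfl (by norm_num) (by norm_num)
    linarith [h.1, h.2]
  have hC : Cm ≤ Cp := by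
    have h := hφcomp 0 1 zero_le_one (by norm_num)
    rw [hφ0, hφ1] at h
    linarith [h.1, h.2]
  have hεj : 1 ≤ ε * j := by
    rw [div_le_iff₀ (by positivity)] at hj0
    have h1 : γm * Cm ≤ γp * Cp := by gcongr
    have h2 : 0 < γm * Cm := by positivity
    by_contra! hcon
    nlinarith
  have hfinal : lam * γm * Cm * (1 - ε) * (j : ℝ) / (q k : ℝ) ≤
      lam * (γm * Cm * (((j : ℝ) - 1) / q k)) := by
    have : (1 - ε) * (j : ℝ) ≤ j - 1 := by linarith
    calc lam * γm * Cm * (1 - ε) * (j : ℝ) / (q k : ℝ)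
        = lam * (γm * Cm * (((1 - ε) * (j : ℝ)) / q k)) := by ring
      _ ≤ lam * (γm * Cm * (((j : ℝ) - 1) / q k)) := by gcongr
  linarith
end
end

section
/- Let Ñ_n(x,E) = #{ i : μ̃_i(x) ≤ E } count the eigenvalues of the periodic restriction H̃_n(x) that are at most E, and assume that for every E the integrated density of states N(E) = lim_{n→∞} (1/n) ∫ Ñ_n(x,E) dν(x) exists. Then N is Lipschitz continuous with constant 1/(λγ₋C₋): for all E, E′ ∈ ℝ, |N(E) − N(E′)| ≤ |E − E′|/(λ·γ₋·C₋). -/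
/-!
The bound already holds before the limit: for every size `m` and `E ≤ E'`, the `ν`-average of the
number of eigenvalues of `HPer` in `(E, E']` is at most `m s` with `s = (E' - E) / (λ γ₋ C₋)`.

The idea is to compare the matrix at `x` with the matrix at the point `y` to the right of `x` with
`ν (x, y] = s`. Since `ν` is `T`-invariant, `ν (T^j x, T^j y] = s` for all `j`, hence
`T^j y - T^j x ≥ C₋ s`. If no integer lies in `(T^j x, T^j y]`, then `f` is increasing there and the
`j`-th diagonal entry grows by at least `λ γ₋ C₋ s = E' - E`. The remaining sites form a set `S`,
and the min-max principle (`eigCount_le`, `eigCount_diagonal_le`) gives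
`#{eigenvalues at y ≤ E'} ≤ #{eigenvalues at x ≤ E} + #S`.

To integrate this, the distribution function of `ν` is used as a coordinate (`exists_conj`): it
turns `ν` into Lebesgue measure, `T` into a translation, and `x ↦ y` into translation by `s`, which
preserves the integral of a periodic function over a period. In this coordinate `#S` is at most a
sum of `m` terms `⌊t + s + c⌋ - ⌊t + c⌋`, each with mean `s` (`floor_jump_integral`). The
measurability needed for the integrals comes from the upper semicontinuity of the eigenvalue count
in the diagonal entries (`measurable_eigCount_diagonal`).
-/

open MeasureTheory Polynomial Filter

noncomputable section

attribute [local instance] Matrix.normedAddCommGroup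

/-! ### Eigenvalue counting -/

/-- The number of eigenvalues (roots of the characteristic polynomial, with multiplicity)
of `A` that are at most `E`. -/
def eigCount {n : ℕ} (A : Matrix (Fin n) (Fin n) ℝ) (E : ℝ) : ℕ :=
  Multiset.countP (fun t => t ≤ E) A.charpoly.roots

lemma eigCount_eq {n : ℕ} {A : Matrix (Fin n) (Fin n) ℝ} {e : Fin n → ℝ}
    (h : A.charpoly = ∏ i, (X - Polynomial.C (e i))) (E : ℝ) :
    eigCount A E = (Finset.univ.filter fun i => e i ≤ E).card := by
  have h2 : A.charpoly.roots = Finset.univ.val.map e := by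
    rw [h, ← Polynomial.roots_multiset_prod_X_sub_C (Finset.univ.val.map e), Multiset.map_map]
    rfl
  rw [eigCount, h2, Multiset.countP_map]
  rfl

/-- The spectral theorem in coordinates, with Parseval's identity and the diagonalised
quadratic form. -/
lemma exists_eigen {n : ℕ} {A : Matrix (Fin n) (Fin n) ℝ} (hA : A.IsHermitian) :
    ∃ (b : Fin n → Fin n → ℝ) (e : Fin n → ℝ),
      A.charpoly = ∏ i, (X - Polynomial.C (e i)) ∧
      (∀ i j, b i ⬝ᵥ b j = if i = j then 1 else 0) ∧
      (∀ v, v ⬝ᵥ v = ∑ i, (b i ⬝ᵥ v) ^ 2) ∧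
      (∀ v, v ⬝ᵥ A.mulVec v = ∑ i, e i * (b i ⬝ᵥ v) ^ 2) := by
  have hpars : ∀ x y : Fin n → ℝ, x ⬝ᵥ y =
      ∑ i, ((hA.eigenvectorBasis i).ofLp ⬝ᵥ x) * ((hA.eigenvectorBasis i).ofLp ⬝ᵥ y) := by
    intro x y
    have := hA.eigenvectorBasis.sum_inner_mul_inner (WithLp.toLp 2 x) (WithLp.toLp 2 y)
    simp only [EuclideanSpace.inner_eq_star_dotProduct, star_trivial] at this
    rw [dotProduct_comm x y, ← this]
    refine Finset.sum_congr rfl fun i _ => ?_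
    rw [dotProduct_comm y]
  refine ⟨fun i => (hA.eigenvectorBasis i).ofLp, hA.eigenvalues, ?_, ?_, ?_, ?_⟩
  · simpa using hA.charpoly_eq
  · intro i j
    have := orthonormal_iff_ite.1 hA.eigenvectorBasis.orthonormal i j
    rw [EuclideanSpace.inner_eq_star_dotProduct, star_trivial, dotProduct_comm] at this
    exact this
  · intro v
    rw [hpars]
    exact Finset.sum_congr rfl fun i _ => by ring
  · intro v
    rw [hpars]
    refine Finset.sum_congr rfl fun i _ => ?_
    have hT : A.transpose = A := by simpa [Matrix.IsHermitian] using hA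
    rw [Matrix.dotProduct_mulVec, ← Matrix.mulVec_transpose, hT, hA.mulVec_eigenvectorBasis,
      smul_dotProduct, smul_eq_mul]
    ring

/-- Weyl-type comparison: if the quadratic form of `B` dominates that of `A + δ` on the vectors
vanishing on `S`, then `B` has at most `#S` more eigenvalues below `E + δ` than `A` has below `E`.
Otherwise a dimension count produces a nonzero vector in the span of the low eigenvectors of `B`
that vanishes on `S` and is orthogonal to the low eigenvectors of `A`. -/
lemma eigCount_le {n : ℕ} {A B : Matrix (Fin n) (Fin n) ℝ} (hA : A.IsHermitian)
    (hB : B.IsHermitian) (S : Finset (Fin n)) (E δ : ℝ)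
    (h : ∀ v : Fin n → ℝ, (∀ i ∈ S, v i = 0) →
      v ⬝ᵥ A.mulVec v + δ * (v ⬝ᵥ v) ≤ v ⬝ᵥ B.mulVec v) :
    eigCount B (E + δ) ≤ eigCount A E + S.card := by
  obtain ⟨a, e, hAe, -, hAn, hAq⟩ := exists_eigen hA
  obtain ⟨b, g, hBg, hBo, hBn, hBq⟩ := exists_eigen hB
  rw [eigCount_eq hAe, eigCount_eq hBg]
  by_contra! hlt
  set IA := Finset.univ.filter fun i => e i ≤ E with hIA
  set IB := Finset.univ.filter fun i => g i ≤ E + δ with hIB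
  let V : (IB → ℝ) →ₗ[ℝ] (Fin n → ℝ) := ∑ i : IB, (LinearMap.proj i).smulRight (b i)
  let L : (IB → ℝ) →ₗ[ℝ] (IA → ℝ) × (S → ℝ) :=
    ((LinearMap.pi fun k : IA => dotProductBilin ℝ ℝ (a k)).prod
      (LinearMap.pi fun k : S => LinearMap.proj (k : Fin n))) ∘ₗ V
  have hker : LinearMap.ker L ≠ ⊥ := by
    apply LinearMap.ker_ne_bot_of_finrank_lt
    simpa using hlt
  obtain ⟨c, hc, hc0⟩ := Submodule.exists_mem_ne_zero_of_ne_bot hker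
  have hL : L c = 0 := hc
  set v := V c with hv
  have hVc : v = ∑ i : IB, c i • b i := by simp [hv, V]
  have hbv : ∀ j, b j ⬝ᵥ v = ∑ i : IB, if j = i then c i else 0 := by
    intro j
    rw [hVc, dotProduct_sum]
    refine Finset.sum_congr rfl fun i _ => ?_
    rw [dotProduct_smul, hBo]
    simp
  have hbv1 : ∀ j : IB, b j ⬝ᵥ v = c j := by
    intro j
    rw [hbv, Finset.sum_eq_single j]
    · simp
    · intro i _ hij
      rw [if_neg]
      exact fun h => hij (Subtype.ext h.symm)
    · simp
  have hbv0 : ∀ j, ¬ g j ≤ E + δ → b j ⬝ᵥ v = 0 := by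
    intro j hj
    rw [hbv]
    refine Finset.sum_eq_zero fun i _ => if_neg ?_
    rintro rfl
    exact hj (Finset.mem_filter.1 i.2).2
  have hav : ∀ k, e k ≤ E → a k ⬝ᵥ v = 0 := by
    intro k hk
    have := congrFun (congrArg Prod.fst hL) ⟨k, by simp [hIA, hk]⟩
    simpa [L] using this
  have hSv : ∀ i ∈ S, v i = 0 := by
    intro k hk
    have := congrFun (congrArg Prod.snd hL) ⟨k, hk⟩
    simpa [L] using this
  have hv0 : v ≠ 0 := by
    intro h0
    apply hc0
    ext j
    rw [← hbv1, h0]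
    simp
  have hpos : 0 < v ⬝ᵥ v := by
    have := Matrix.dotProduct_star_self_pos_iff.2 hv0
    simpa using this
  have h1 : v ⬝ᵥ B.mulVec v ≤ (E + δ) * (v ⬝ᵥ v) := by
    rw [hBq, hBn, Finset.mul_sum]
    refine Finset.sum_le_sum fun i _ => ?_
    by_cases hi : g i ≤ E + δ
    · exact mul_le_mul_of_nonneg_right hi (sq_nonneg _)
    · rw [hbv0 i hi]; simp
  have h2 : E * (v ⬝ᵥ v) < v ⬝ᵥ A.mulVec v := by
    rw [hAn] at hpos
    obtain ⟨k, -, hk⟩ := Finset.exists_lt_of_sum_lt (s := Finset.univ) (f := fun _ => (0 : ℝ))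
      (g := fun i => (a i ⬝ᵥ v) ^ 2) (by simpa using hpos)
    rw [hAq, hAn, Finset.mul_sum]
    refine Finset.sum_lt_sum (fun i _ => ?_) ⟨k, Finset.mem_univ _, ?_⟩
    · by_cases hi : e i ≤ E
      · rw [hav i hi]; simp
      · exact mul_le_mul_of_nonneg_right (not_le.1 hi).le (sq_nonneg _)
    · refine mul_lt_mul_of_pos_right ?_ hk
      by_contra! hi
      rw [hav k hi] at hk
      simp at hk
  have h3 := h v hSv
  linarith

lemma eigCount_le_card {n : ℕ} {A : Matrix (Fin n) (Fin n) ℝ} (E : ℝ) : eigCount A E ≤ n := by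
  refine (Multiset.countP_le_card _ _).trans ((Polynomial.card_roots' _).trans ?_)
  rw [Matrix.charpoly_natDegree_eq_dim, Fintype.card_fin]

lemma eigCount_mono {n : ℕ} (A : Matrix (Fin n) (Fin n) ℝ) {E E' : ℝ} (h : E ≤ E') :
    eigCount A E ≤ eigCount A E' := by
  unfold eigCount
  rw [Multiset.countP_eq_card_filter, Multiset.countP_eq_card_filter]
  exact Multiset.card_le_card (Multiset.monotone_filter_right _ fun _ ht => ht.trans h)

/-- Right-continuity of the eigenvalue counting function, which is an integer-valued step
function. -/
lemma eigCount_right {n : ℕ} {A : Matrix (Fin n) (Fin n) ℝ} (hA : A.IsHermitian) (E : ℝ) :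
    ∃ ε > 0, eigCount A (E + ε) = eigCount A E := by
  obtain ⟨b, e, hAe, -⟩ := exists_eigen hA
  have : ∀ᶠ ε in nhdsWithin (0 : ℝ) (Set.Ioi 0), ∀ i, e i ≤ E + ε → e i ≤ E := by
    rw [Filter.eventually_all]
    intro i
    by_cases hi : e i ≤ E
    · exact Filter.Eventually.of_forall fun _ _ => hi
    · have : ∀ᶠ ε in nhdsWithin (0 : ℝ) (Set.Ioi 0), ε < e i - E :=
        nhdsWithin_le_nhds (Iio_mem_nhds (by linarith [not_le.1 hi]))
      filter_upwards [this] with ε hε h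
      linarith
  obtain ⟨ε, hε, hε0⟩ := (this.and self_mem_nhdsWithin).exists
  refine ⟨ε, hε0, le_antisymm ?_ (eigCount_mono A (by linarith [show 0 < ε from hε0]))⟩
  rw [eigCount_eq hAe, eigCount_eq hAe]
  exact Finset.card_le_card (Finset.monotone_filter_right _ fun i _ => hε i)

/-! ### The periodic restriction as a function of its diagonal -/

/-- The part of `HPer` that does not depend on the potential. -/
def hopMat (n : ℕ) : Matrix (Fin n) (Fin n) ℝ :=
  Matrix.of (fun i j : Fin n =>
      if (i : ℕ) + 1 = (j : ℕ) ∨ (j : ℕ) + 1 = (i : ℕ) then (1 : ℝ) else 0) +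
  Matrix.of (fun i j : Fin n =>
      if ((i : ℕ) = 0 ∧ (j : ℕ) = n - 1) ∨ ((i : ℕ) = n - 1 ∧ (j : ℕ) = 0) then (1 : ℝ) else 0)

lemma HPer_eq (lam : ℝ) (f : ℝ → ℝ) (T : Equiv.Perm ℝ) (x : ℝ) (n : ℕ) :
    HPer lam f T x n =
      hopMat n + Matrix.diagonal (fun i : Fin n => lam * f ((T ^ (i : ℕ)) x)) := by
  ext i j
  simp only [HPer, HDir, hopMat, Matrix.add_apply, Matrix.of_apply, Matrix.diagonal_apply]
  ring

lemma hopMat_add_diagonal_isHermitian {n : ℕ} (d : Fin n → ℝ) :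
    (hopMat n + Matrix.diagonal d).IsHermitian := by
  refine Matrix.IsHermitian.add ?_ (Matrix.isHermitian_diagonal d)
  ext i j
  simp only [hopMat, Matrix.conjTranspose_apply, Matrix.add_apply, Matrix.of_apply, star_trivial]
  congr 1
  · simp only [or_comm]
  · simp only [or_comm, and_comm]

/-- If raising the energy by `δ` is compensated by the diagonal outside of `S`, the number of
eigenvalues increases by at most `#S`. -/
lemma eigCount_diagonal_le {n : ℕ} (d d' : Fin n → ℝ) (S : Finset (Fin n)) (E δ : ℝ)
    (h : ∀ i, i ∉ S → d i + δ ≤ d' i) :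
    eigCount (hopMat n + Matrix.diagonal d') (E + δ) ≤
      eigCount (hopMat n + Matrix.diagonal d) E + S.card := by
  refine eigCount_le (hopMat_add_diagonal_isHermitian d) (hopMat_add_diagonal_isHermitian d')
    S E δ fun v hv => ?_
  have key : v ⬝ᵥ (Matrix.diagonal d).mulVec v + δ * (v ⬝ᵥ v) ≤
      v ⬝ᵥ (Matrix.diagonal d').mulVec v := by
    simp only [dotProduct, Matrix.mulVec_diagonal, Finset.mul_sum]
    rw [← Finset.sum_add_distrib]
    refine Finset.sum_le_sum fun i _ => ?_
    by_cases hi : i ∈ S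
    · simp [hv i hi]
    · nlinarith [mul_le_mul_of_nonneg_right (h i hi) (mul_self_nonneg (v i))]
  rw [Matrix.add_mulVec, Matrix.add_mulVec, dotProduct_add, dotProduct_add]
  linarith

/-- The count is upper semicontinuous in the diagonal, as it is right-continuous in the energy and
lowering the diagonal by `ε` shifts the energy by at most `ε`. -/
lemma measurable_eigCount_diagonal (n : ℕ) (E : ℝ) :
    Measurable fun d : Fin n → ℝ => eigCount (hopMat n + Matrix.diagonal d) E := by
  apply UpperSemicontinuous.measurable
  intro d k hk
  obtain ⟨ε, hε, hEε⟩ := eigCount_right (hopMat_add_diagonal_isHermitian d) E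
  have hev : ∀ᶠ d' in nhds d, ∀ i, d i - ε < d' i := by
    rw [Filter.eventually_all]
    intro i
    exact (continuous_apply i).continuousAt.eventually (Ioi_mem_nhds (by linarith))
  filter_upwards [hev] with d' hd'
  refine lt_of_le_of_lt ?_ hk
  change _ ≤ eigCount _ E
  rw [← hEε]
  have := eigCount_diagonal_le d d' ∅ (E + ε) (-ε) fun i _ => by linarith [hd' i]
  simpa using this

/-! ### Straightening the dynamics -/

/-- The invariant measure straightens the dynamics: the inverse `h` of its distribution function
carries Lebesgue measure to `ν` and a translation to `T`, and it stretches by a factor of at least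
`Cm` every interval whose image has length at most one. -/
lemma exists_conj (T : Equiv.Perm ℝ) (ν : Measure ℝ) (Cm Cp : ℝ)
    (hTmono : StrictMono ⇑T)
    (hCm : 0 < Cm) (hCp : 0 < Cp)
    (hνprob : ν (Set.Ico (0 : ℝ) 1) = 1)
    (hνinv : MeasureTheory.Measure.map (⇑T) ν = ν)
    (hνper : MeasureTheory.Measure.map (fun t : ℝ => t + 1) ν = ν)
    (hcomp : ∀ u v : ℝ, u ≤ v → v ≤ u + 1 →
      Cm * (ν (Set.Icc u v)).toReal ≤ v - u ∧ v - u ≤ Cp * (ν (Set.Icc u v)).toReal) :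
    ∃ (h : ℝ ≃o ℝ) (ρ : ℝ), MeasurePreserving h volume ν ∧ h 0 = 0 ∧
      (∀ t, h (t + 1) = h t + 1) ∧ (∀ t, T (h t) = h (t + ρ)) ∧
      (∀ s t, s ≤ t → h t ≤ h s + 1 → Cm * (t - s) ≤ h t - h s) := by
  have hfin1 : ∀ u v : ℝ, u < v → v ≤ u + 1 → ν (Set.Icc u v) ≠ ⊤ := by
    intro u v huv hv htop
    have := (hcomp u v huv.le hv).2
    rw [htop] at this
    simp at this
    linarith
  have : IsLocallyFiniteMeasure ν := by
    refine ⟨fun x => ⟨Set.Icc (x - 1/2) (x + 1/2), Icc_mem_nhds (by linarith) (by linarith), ?_⟩⟩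
    exact lt_top_iff_ne_top.2 (hfin1 _ _ (by linarith) (by linarith))
  have : NullSingletonClass ν := by
    refine ⟨fun x => ?_⟩
    have h1 := (hcomp x x le_rfl (by linarith)).1
    rw [Set.Icc_self, sub_self] at h1
    have hf : ν {x} ≠ ⊤ := ne_top_of_le_ne_top (hfin1 x (x + 1) (by linarith) le_rfl)
      (measure_mono (by rw [Set.singleton_subset_iff]; exact ⟨le_rfl, by linarith⟩))
    have h2 : (ν {x}).toReal = 0 :=
      le_antisymm (by by_contra! h; linarith [mul_pos hCm h]) ENNReal.toReal_nonneg
    exact ((ENNReal.toReal_eq_zero_iff _).1 h2).resolve_right hf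
  -- the distribution function of `ν`, normalised by `G 0 = 0`
  let G : ℝ → ℝ := fun x => ∫ _ in (0 : ℝ)..x, (1 : ℝ) ∂ν
  have hG : ∀ x y, x ≤ y → G y - G x = ν.real (Set.Ioc x y) := by
    intro x y hxy
    have : G y - G x = ∫ _ in x..y, (1 : ℝ) ∂ν := by
      apply intervalIntegral.integral_interval_sub_left <;> exact intervalIntegrable_const
    rw [this, intervalIntegral.integral_const', Set.Ioc_eq_empty (not_lt.2 hxy)]
    simp
  have hIoc : ∀ x y, ν.real (Set.Ioc x y) = (ν (Set.Icc x y)).toReal := fun x y => by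
    rw [Measure.real, measure_congr Ioc_ae_eq_Icc]
  have hG0 : G 0 = 0 := intervalIntegral.integral_same
  have hinvar : ∀ S : ℝ → ℝ, StrictMono S → Measure.map S ν = ν →
      ∀ x y, x ≤ y → G (S y) - G (S x) = G y - G x := by
    intro S hS hSν x y hxy
    rw [hG _ _ (hS.monotone hxy), hG _ _ hxy, Measure.real, Measure.real]
    nth_rewrite 1 [← hSν]
    rw [Measure.map_apply hS.monotone.measurable measurableSet_Ioc]
    congr 2
    ext z
    simp [hS.lt_iff_lt, hS.le_iff_le]
  have hinvar' : ∀ S : ℝ → ℝ, StrictMono S → Measure.map S ν = ν →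
      ∀ x, G (S x) = G x + G (S 0) := by
    intro S hS hSν x
    rcases le_total 0 x with hx | hx
    · have := hinvar S hS hSν 0 x hx; linarith
    · have := hinvar S hS hSν x 0 hx; linarith
  have hG1 : G 1 = 1 := by
    have := hG 0 1 zero_le_one
    rw [hG0, sub_zero] at this
    rw [this, Measure.real, measure_congr Ioc_ae_eq_Icc, ← measure_congr Ico_ae_eq_Icc, hνprob]
    simp
  have hGper : ∀ x, G (x + 1) = G x + 1 := by
    intro x
    have := hinvar' (fun t => t + 1) (fun a b hab => by simpa using hab) hνper x
    simpa [hG1] using this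
  have hGT : ∀ x, G (T x) = G x + G (T 0) := hinvar' T hTmono hνinv
  have hGlow : ∀ x y, x ≤ y → y ≤ x + 1 → y - x ≤ Cp * (G y - G x) := fun x y h1 h2 => by
    rw [hG x y h1, hIoc]; exact (hcomp x y h1 h2).2
  have hGup : ∀ x y, x ≤ y → y ≤ x + 1 → Cm * (G y - G x) ≤ y - x := fun x y h1 h2 => by
    rw [hG x y h1, hIoc]; exact (hcomp x y h1 h2).1
  have hGm : Monotone G := fun x y hxy => by
    have := hG x y hxy
    linarith [measureReal_nonneg (μ := ν) (s := Set.Ioc x y)]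
  have hGs : StrictMono G := by
    intro x y hxy
    have h1 := hGlow x (min y (x + 1)) (le_min hxy.le (by linarith)) (min_le_right _ _)
    have h2 : x < min y (x + 1) := lt_min hxy (by linarith)
    have h3 : 0 < G (min y (x + 1)) - G x := by
      by_contra! h
      nlinarith
    linarith [hGm (min_le_left y (x + 1))]
  have hGc : Continuous G := by
    rw [Metric.continuous_iff]
    intro x ε hε
    refine ⟨min 1 (Cm * ε), lt_min one_pos (mul_pos hCm hε), fun y hy => ?_⟩
    rw [Real.dist_eq] at hy ⊢
    have hy1 := hy.trans_le (min_le_left _ _)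
    have hy2 := hy.trans_le (min_le_right _ _)
    rw [abs_lt] at *
    rcases le_total x y with h | h
    · have := hGup x y h (by linarith)
      have h4 := hGm h
      have : Cm * (G y - G x) < Cm * ε := by linarith
      have := lt_of_mul_lt_mul_left this hCm.le
      constructor <;> linarith
    · have := hGup y x h (by linarith)
      have h4 := hGm h
      have : Cm * (G x - G y) < Cm * ε := by linarith
      have := lt_of_mul_lt_mul_left this hCm.le
      constructor <;> linarith
  have hGn : ∀ n : ℕ, G n = n ∧ G (-n) = -n := by
    intro n
    induction n with
    | zero => simp [hG0]
    | succ k ih =>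
      refine ⟨by push_cast; rw [hGper, ih.1], ?_⟩
      have := hGper (-((k : ℝ) + 1))
      rw [show -((k : ℝ) + 1) + 1 = -k by ring, ih.2] at this
      push_cast
      linarith
  have hGsurj : Function.Surjective G := by
    intro y
    obtain ⟨n, hn⟩ := exists_nat_ge |y|
    have := abs_le.1 hn
    exact mem_range_of_exists_le_of_exists_ge hGc ⟨-n, by rw [(hGn n).2]; linarith⟩
      ⟨n, by rw [(hGn n).1]; linarith⟩
  let e : ℝ ≃o ℝ := hGs.orderIsoOfSurjective G hGsurj
  have he : ∀ x, e x = G x := fun x => rfl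
  have hGe : ∀ t, G (e.symm t) = t := fun t => by rw [← he, e.apply_symm_apply]
  have hsymm : ∀ t x, G x = t → e.symm t = x := fun t x hx => by
    rw [← hx, ← he, e.symm_apply_apply]
  refine ⟨e.symm, G (T 0), ⟨e.symm.monotone.measurable, ?_⟩, hsymm _ _ hG0, ?_, ?_, ?_⟩
  · symm
    apply Real.measure_ext_Ioo_rat
    intro a b
    rw [Measure.map_apply e.symm.monotone.measurable measurableSet_Ioo]
    have hpre : e.symm ⁻¹' Set.Ioo (a : ℝ) b = Set.Ioo (G a) (G b) := by
      ext t
      rw [Set.mem_preimage, Set.mem_Ioo, Set.mem_Ioo, ← hGs.lt_iff_lt (b := e.symm t),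
        ← hGs.lt_iff_lt (a := e.symm t), hGe]
    rw [hpre, Real.volume_Ioo]
    rcases le_total (a : ℝ) b with hab | hab
    · rw [hG _ _ hab, Measure.real, ENNReal.ofReal_toReal measure_Ioc_lt_top.ne]
      exact measure_congr Ioo_ae_eq_Ioc
    · rw [Set.Ioo_eq_empty (not_lt.2 hab), measure_empty,
        ENNReal.ofReal_of_nonpos (by linarith [hGm hab])]
  · intro t
    apply hsymm
    rw [hGper, hGe]
  · intro t
    symm
    apply hsymm
    rw [hGT, hGe]
  · intro s t hst hle
    have := hGup _ _ (e.symm.monotone hst) hle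
    rwa [hGe, hGe] at this

/-! ### The sawtooth potential and integer crossings -/

lemma measurable_of_sawtooth {f : ℝ → ℝ} {γm γp : ℝ} (hγm : 0 < γm)
    (hγp : 0 < γp) (hfper : ∀ t : ℝ, f (t + 1) = f t)
    (hfLip : ∀ u v : ℝ, 0 ≤ u → u < v → v < 1 →
      γm * (v - u) ≤ f v - f u ∧ f v - f u ≤ γp * (v - u)) : Measurable f := by
  have hmono : MonotoneOn f (Set.Ico 0 1) := by
    intro u hu v hv huv
    rcases huv.eq_or_lt with rfl | h
    · exact le_rfl
    · have := (hfLip u v hu.1 h hv.2).1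
      nlinarith
  have hlow : BddBelow (f '' Set.Ico 0 1) := by
    refine ⟨f 0, ?_⟩
    rintro _ ⟨u, hu, rfl⟩
    exact hmono ⟨le_rfl, one_pos⟩ hu hu.1
  have hup : BddAbove (f '' Set.Ico 0 1) := by
    refine ⟨f 0 + γp, ?_⟩
    rintro _ ⟨u, hu, rfl⟩
    rcases hu.1.eq_or_lt with h | h
    · rw [← h]; linarith
    · have := (hfLip 0 u le_rfl h hu.2).2
      nlinarith [hu.2]
  obtain ⟨g, hg, hfg⟩ := hmono.exists_monotone_extension hlow hup
  have : f = fun t => g (Int.fract t) := by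
    ext t
    rw [← hfg ⟨Int.fract_nonneg t, Int.fract_lt_one t⟩]
    have hp : Function.Periodic f 1 := hfper
    have := hp.sub_int_mul_eq (x := t) ⌊t⌋
    rw [mul_one] at this
    exact this.symm
  rw [this]
  exact hg.measurable.comp measurable_fract

/-- On a unit cell between consecutive integers, `f` increases at rate at least `γm`. -/
lemma sawtooth_lower {f : ℝ → ℝ} {γm γp : ℝ} (hfper : ∀ t : ℝ, f (t + 1) = f t)
    (hfLip : ∀ u v : ℝ, 0 ≤ u → u < v → v < 1 →
      γm * (v - u) ≤ f v - f u ∧ f v - f u ≤ γp * (v - u))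
    {u v : ℝ} (huv : u ≤ v) (hfl : ⌊u⌋ = ⌊v⌋) : γm * (v - u) ≤ f v - f u := by
  rcases huv.eq_or_lt with rfl | h
  · simp
  have hp : Function.Periodic f 1 := hfper
  have h1 := hp.sub_int_mul_eq (x := u) ⌊u⌋
  have h2 := hp.sub_int_mul_eq (x := v) ⌊u⌋
  rw [mul_one] at h1 h2
  have h3 := (hfLip (u - ⌊u⌋) (v - ⌊u⌋) (by linarith [Int.floor_le u]) (by linarith)
    (by rw [hfl]; linarith [Int.lt_floor_add_one v])).1
  rw [h1, h2] at h3
  linarith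

lemma floor_conj {h : ℝ ≃o ℝ} (h0 : h 0 = 0) (h1 : ∀ t, h (t + 1) = h t + 1) (t : ℝ) :
    ⌊h t⌋ = ⌊t⌋ := by
  have hp : Function.Periodic (fun t => h t - t) 1 := fun t => by
    change h (t + 1) - (t + 1) = h t - t
    rw [h1]; ring
  have hn : ∀ n : ℤ, h n = n := fun n => by
    have := hp.int_mul_eq n
    simp only [mul_one, h0, sub_zero] at this
    linarith
  rw [Int.floor_eq_iff]
  constructor
  · rw [← hn]; exact h.monotone (Int.floor_le t)
  · rw [← hn, ← h1]; exact h.strictMono (Int.lt_floor_add_one t)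

lemma pow_conj {h : ℝ ≃o ℝ} {T : Equiv.Perm ℝ} {ρ : ℝ} (hT : ∀ t, T (h t) = h (t + ρ))
    (j : ℕ) (t : ℝ) : (T ^ j) (h t) = h (t + j * ρ) := by
  induction j with
  | zero => simp
  | succ k ih =>
    rw [pow_succ', Equiv.Perm.mul_apply, ih, hT]
    congr 1
    push_cast
    ring

lemma intervalIntegrable_fract_add (c : ℝ) :
    IntervalIntegrable (fun t : ℝ => Int.fract (t + c)) volume 0 1 := by
  rw [intervalIntegrable_iff]
  refine Measure.integrableOn_of_bounded (M := 1) (by simp)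
    (measurable_fract.comp (measurable_id.add_const c)).aestronglyMeasurable ?_
  refine Filter.Eventually.of_forall fun t => ?_
  rw [Real.norm_eq_abs, abs_of_nonneg (Int.fract_nonneg _)]
  exact (Int.fract_lt_one _).le

lemma integral_fract_add (c : ℝ) :
    ∫ t in (0 : ℝ)..1, Int.fract (t + c) = ∫ t in (0 : ℝ)..1, Int.fract t := by
  rw [intervalIntegral.integral_comp_add_right (fun t : ℝ => Int.fract t)]
  have hp : Function.Periodic (fun t : ℝ => Int.fract t) 1 := fun t => Int.fract_add_one t
  have := hp.intervalIntegral_add_eq c 0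
  rw [zero_add, add_comm c] at this
  rwa [zero_add]

/-- A window of length `s` contains `s` integers on average. -/
lemma floor_jump_integral (c s : ℝ) :
    IntervalIntegrable (fun t : ℝ => ((⌊t + s + c⌋ : ℝ) - ⌊t + c⌋)) volume 0 1 ∧
    ∫ t in (0 : ℝ)..1, ((⌊t + s + c⌋ : ℝ) - ⌊t + c⌋) = s := by
  have : (fun t : ℝ => ((⌊t + s + c⌋ : ℝ) - ⌊t + c⌋)) =
      fun t => s - Int.fract (t + (s + c)) + Int.fract (t + c) := by
    ext t
    rw [← add_assoc, Int.fract, Int.fract]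
    ring
  have i1 : IntervalIntegrable (fun _ : ℝ => s) volume 0 1 := intervalIntegrable_const
  have i2 := intervalIntegrable_fract_add (s + c)
  have i3 := intervalIntegrable_fract_add c
  rw [this]
  refine ⟨(i1.sub i2).add i3, ?_⟩
  rw [intervalIntegral.integral_add (i1.sub i2) i3, intervalIntegral.integral_sub i1 i2,
    integral_fract_add, integral_fract_add]
  simp

/-! ### Averaging over the circle -/

/-- The finite-volume estimate: for every size `m`, the averaged number of eigenvalues of
`HPer` in `(E, E']` lies between `0` and `m (E' - E) / (λ γm Cm)`. -/
lemma finite_volume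
    (f : ℝ → ℝ) (T : Equiv.Perm ℝ) (ν : Measure ℝ)
    (γm γp Cm Cp lam : ℝ)
    (hγm : 0 < γm) (hγp : 0 < γp) (hlam : 0 < lam)
    (hfper : ∀ t : ℝ, f (t + 1) = f t)
    (hfLip : ∀ u v : ℝ, 0 ≤ u → u < v → v < 1 →
      γm * (v - u) ≤ f v - f u ∧ f v - f u ≤ γp * (v - u))
    (hTmono : StrictMono ⇑T)
    (hCm : 0 < Cm) (hCp : 0 < Cp)
    (hνprob : ν (Set.Ico (0 : ℝ) 1) = 1)
    (hνinv : MeasureTheory.Measure.map (⇑T) ν = ν)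
    (hνper : MeasureTheory.Measure.map (fun t : ℝ => t + 1) ν = ν)
    (hcomp : ∀ u v : ℝ, u ≤ v → v ≤ u + 1 →
      Cm * (ν (Set.Icc u v)).toReal ≤ v - u ∧ v - u ≤ Cp * (ν (Set.Icc u v)).toReal)
    (m : ℕ) {E E' : ℝ} (hE : E ≤ E') :
    (∫ x in Set.Ico (0 : ℝ) 1, (eigCount (HPer lam f T x m) E : ℝ) ∂ν) ≤
      (∫ x in Set.Ico (0 : ℝ) 1, (eigCount (HPer lam f T x m) E' : ℝ) ∂ν) ∧
    (∫ x in Set.Ico (0 : ℝ) 1, (eigCount (HPer lam f T x m) E' : ℝ) ∂ν) ≤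
      (∫ x in Set.Ico (0 : ℝ) 1, (eigCount (HPer lam f T x m) E : ℝ) ∂ν) +
        m * ((E' - E) / (lam * γm * Cm)) := by
  obtain ⟨h, ρ, hmp, h0, h1, hT, hlow⟩ :=
    exists_conj T ν Cm Cp hTmono hCm hCp hνprob hνinv hνper hcomp
  have hfm := measurable_of_sawtooth hγm hγp hfper hfLip
  set s := (E' - E) / (lam * γm * Cm) with hs
  have hs0 : 0 ≤ s := div_nonneg (by linarith) (by positivity)
  have hsE : lam * (γm * (Cm * s)) = E' - E := by
    rw [hs]; field_simp
  let k : ℝ → ℝ → ℝ := fun E t => (eigCount (HPer lam f T (h t) m) E : ℝ)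
  have hH : ∀ t, HPer lam f T (h t) m = hopMat m +
      Matrix.diagonal (fun i : Fin m => lam * f (h (t + (i : ℕ) * ρ))) := fun t => by
    rw [HPer_eq]
    simp only [pow_conj hT]
  have hkper : ∀ E, Function.Periodic (k E) 1 := by
    intro E t
    change (eigCount _ _ : ℝ) = (eigCount _ _ : ℝ)
    rw [hH, hH]
    simp only [add_right_comm t 1, h1, hfper]
  have hkmeas : ∀ E, Measurable (k E) := by
    intro E
    have : k E = fun t => ((eigCount (hopMat m +
      Matrix.diagonal (fun i : Fin m => lam * f (h (t + (i : ℕ) * ρ)))) E : ℕ) : ℝ) := by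
      ext t
      change (eigCount _ _ : ℝ) = _
      rw [hH]
    rw [this]
    refine (measurable_from_top (f := fun n : ℕ => (n : ℝ))).comp
      ((measurable_eigCount_diagonal m E).comp
        (measurable_pi_lambda (fun t (i : Fin m) => lam * f (h (t + (i : ℕ) * ρ))) fun i => ?_))
    exact (hfm.comp (h.monotone.measurable.comp (measurable_id.add_const _))).const_mul lam
  have hkint : ∀ E a b, IntervalIntegrable (k E) volume a b := by
    intro E a b
    rw [intervalIntegrable_iff]
    refine Measure.integrableOn_of_bounded (M := m) (by simp)
      (hkmeas E).aestronglyMeasurable ?_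
    refine Filter.Eventually.of_forall fun t => ?_
    rw [Real.norm_eq_abs, abs_of_nonneg (Nat.cast_nonneg _)]
    exact Nat.cast_le.2 (eigCount_le_card E)
  have hJ : ∀ E, ∫ x in Set.Ico (0 : ℝ) 1, (eigCount (HPer lam f T x m) E : ℝ) ∂ν =
      ∫ t in (0 : ℝ)..1, k E t := by
    intro E
    rw [← hmp.setIntegral_preimage_emb h.toHomeomorph.measurableEmbedding,
      intervalIntegral.integral_of_le zero_le_one, ← integral_Ico_eq_integral_Ioc]
    have : h ⁻¹' Set.Ico 0 1 = Set.Ico 0 1 := by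
      have h11 : h 1 = 1 := by have := h1 0; rwa [zero_add, h0, zero_add] at this
      ext t
      rw [Set.mem_preimage, Set.mem_Ico, Set.mem_Ico]
      nth_rewrite 1 [← h0]
      nth_rewrite 1 [← h11]
      rw [h.le_iff_le, h.lt_iff_lt]
    rw [this]
  have hshift : ∫ t in (0 : ℝ)..1, k E' (t + s) = ∫ t in (0 : ℝ)..1, k E' t := by
    rw [intervalIntegral.integral_comp_add_right (k E')]
    have := (hkper E').intervalIntegral_add_eq s 0
    rw [zero_add, add_comm s] at this
    rwa [zero_add]
  have hpt : ∀ t, k E' (t + s) ≤ k E t +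
      ∑ j : Fin m, ((⌊t + s + (j : ℕ) * ρ⌋ : ℝ) - ⌊t + (j : ℕ) * ρ⌋) := by
    intro t
    -- the sites at which the orbit crosses an integer, so that the potential may drop
    set S : Finset (Fin m) := Finset.univ.filter
      fun j => ⌊t + (j : ℕ) * ρ⌋ ≠ ⌊t + s + (j : ℕ) * ρ⌋ with hS
    have hle : ∀ j : Fin m, t + (j : ℕ) * ρ ≤ t + s + (j : ℕ) * ρ := fun j => by linarith
    have h2 : k E' (t + s) ≤ k E t + S.card := by
      change (eigCount _ _ : ℝ) ≤ (eigCount _ _ : ℝ) + _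
      rw [hH, hH]
      have := eigCount_diagonal_le (fun i : Fin m => lam * f (h (t + (i : ℕ) * ρ)))
        (fun i : Fin m => lam * f (h (t + s + (i : ℕ) * ρ))) S E (E' - E) ?_
      · rw [add_sub_cancel] at this
        exact_mod_cast this
      · intro j hj
        have hfl : ⌊h (t + (j : ℕ) * ρ)⌋ = ⌊h (t + s + (j : ℕ) * ρ)⌋ := by
          rw [floor_conj h0 h1, floor_conj h0 h1]
          by_contra hne
          exact hj (by simp [hS, hne])
        have h3 := sawtooth_lower hfper hfLip (h.monotone (hle j)) hfl
        have h4 := hlow _ _ (hle j) (by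
          have := Int.lt_floor_add_one (h (t + s + (j : ℕ) * ρ))
          have h5 := Int.floor_le (h (t + (j : ℕ) * ρ))
          rw [hfl] at h5
          linarith)
        have h6 : Cm * s ≤ h (t + s + (j : ℕ) * ρ) - h (t + (j : ℕ) * ρ) := by
          refine le_trans (le_of_eq ?_) h4
          ring
        have h7 := (mul_le_mul_of_nonneg_left h6 hγm.le).trans h3
        have h8 := mul_le_mul_of_nonneg_left h7 hlam.le
        rw [hsE] at h8
        linarith
    refine h2.trans (add_le_add le_rfl ?_)
    rw [hS, Finset.card_filter]
    push_cast
    refine Finset.sum_le_sum fun j _ => ?_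
    have hfm := Int.floor_mono (hle j)
    split_ifs with hne
    · have : ⌊t + (j : ℕ) * ρ⌋ + 1 ≤ ⌊t + s + (j : ℕ) * ρ⌋ := lt_of_le_of_ne hfm hne
      have : (⌊t + (j : ℕ) * ρ⌋ : ℝ) + 1 ≤ ⌊t + s + (j : ℕ) * ρ⌋ := by exact_mod_cast this
      linarith
    · have : (⌊t + (j : ℕ) * ρ⌋ : ℝ) ≤ ⌊t + s + (j : ℕ) * ρ⌋ := by exact_mod_cast hfm
      linarith
  rw [hJ, hJ]
  constructor
  · refine intervalIntegral.integral_mono zero_le_one (hkint _ _ _) (hkint _ _ _) fun t => ?_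
    exact Nat.cast_le.2 (eigCount_mono _ hE)
  · have hjump := fun j : Fin m => floor_jump_integral ((j : ℕ) * ρ) s
    have hsumint : IntervalIntegrable (fun t : ℝ => ∑ j : Fin m,
        ((⌊t + s + (j : ℕ) * ρ⌋ : ℝ) - ⌊t + (j : ℕ) * ρ⌋)) volume 0 1 := by
      have := IntervalIntegrable.sum Finset.univ fun j _ => (hjump j).1
      simpa [Finset.sum_fn] using this
    have hshint : IntervalIntegrable (fun t => k E' (t + s)) volume 0 1 := by
      have := (hkint E' (0 + s) (1 + s)).comp_add_right s
      simpa using this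
    calc ∫ t in (0 : ℝ)..1, k E' t = ∫ t in (0 : ℝ)..1, k E' (t + s) := hshift.symm
      _ ≤ ∫ t in (0 : ℝ)..1, (k E t +
          ∑ j : Fin m, ((⌊t + s + (j : ℕ) * ρ⌋ : ℝ) - ⌊t + (j : ℕ) * ρ⌋)) :=
        intervalIntegral.integral_mono zero_le_one hshint ((hkint _ _ _).add hsumint) hpt
      _ = (∫ t in (0 : ℝ)..1, k E t) + m * s := by
        rw [intervalIntegral.integral_add (hkint _ _ _) hsumint,
          intervalIntegral.integral_finsetSum fun j _ => (hjump j).1]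
        simp [fun j => (hjump j).2]

/-- Lipschitz continuity of the integrated density of states:
`|N(E) − N(E′)| ≤ |E − E′| / (λγ₋C₋)`. -/
theorem IDS_lipschitz
    (f : ℝ → ℝ) (T : Equiv.Perm ℝ) (ν : Measure ℝ)
    (γm γp Cm Cp lam α : ℝ) (μ : (m : ℕ) → ℝ → Fin m → ℝ) (N : ℝ → ℝ)
    (hγm : 0 < γm) (hγp : 0 < γp) (hlam : 0 < lam)
    (hfper : ∀ t : ℝ, f (t + 1) = f t) (hf0 : f 0 = 0)
    (hf1 : Filter.Tendsto f (nhdsWithin 1 (Set.Iio 1)) (nhds 1))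
    (hfLip : ∀ u v : ℝ, 0 ≤ u → u < v → v < 1 →
      γm * (v - u) ≤ f v - f u ∧ f v - f u ≤ γp * (v - u))
    (hTmono : StrictMono ⇑T) (hTper : ∀ t : ℝ, T (t + 1) = T t + 1)
    (hαirr : Irrational α)
    (hrot : Filter.Tendsto (fun m : ℕ => (T ^ m) 0 / (m : ℝ)) Filter.atTop (nhds α))
    (hCm : 0 < Cm) (hCp : 0 < Cp)
    (hνprob : ν (Set.Ico (0 : ℝ) 1) = 1)
    (hνinv : MeasureTheory.Measure.map (⇑T) ν = ν)
    (hνper : MeasureTheory.Measure.map (fun t : ℝ => t + 1) ν = ν)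
    (hcomp : ∀ u v : ℝ, u ≤ v → v ≤ u + 1 →
      Cm * (ν (Set.Icc u v)).toReal ≤ v - u ∧ v - u ≤ Cp * (ν (Set.Icc u v)).toReal)
    (hμmono : ∀ (m : ℕ) (z : ℝ), Monotone (μ m z))
    (hμeig : ∀ (m : ℕ) (z : ℝ),
      (HPer lam f T z m).charpoly = ∏ i, (X - Polynomial.C (μ m z i)))
    (hN : ∀ E : ℝ, Filter.Tendsto (fun m : ℕ =>
      (1 / (m : ℝ)) * ∫ x in Set.Ico (0 : ℝ) 1,
        ((Finset.univ.filter fun i : Fin m => μ m x i ≤ E).card : ℝ) ∂ν)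
      Filter.atTop (nhds (N E))) :
    ∀ E E' : ℝ, |N E - N E'| ≤ |E - E'| / (lam * γm * Cm) := by
  have hJ : ∀ (m : ℕ) (E : ℝ), ∫ x in Set.Ico (0 : ℝ) 1,
      ((Finset.univ.filter fun i : Fin m => μ m x i ≤ E).card : ℝ) ∂ν =
      ∫ x in Set.Ico (0 : ℝ) 1, (eigCount (HPer lam f T x m) E : ℝ) ∂ν := by
    intro m E
    congr 1
    ext x
    rw [eigCount_eq (hμeig m x)]
  simp only [hJ] at hN
  have key : ∀ E E' : ℝ, E ≤ E' →
      N E ≤ N E' ∧ N E' ≤ N E + (E' - E) / (lam * γm * Cm) := by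
    intro E E' hE
    have hfv := fun m => finite_volume f T ν γm γp Cm Cp lam hγm hγp hlam hfper hfLip hTmono
      hCm hCp hνprob hνinv hνper hcomp m hE
    have hs0 : 0 ≤ (E' - E) / (lam * γm * Cm) := div_nonneg (by linarith) (by positivity)
    constructor
    · refine le_of_tendsto_of_tendsto' (hN E) (hN E') fun m => ?_
      exact mul_le_mul_of_nonneg_left (hfv m).1 (by positivity)
    · refine le_of_tendsto_of_tendsto' (hN E') ((hN E).add_const _) fun m => ?_
      refine (mul_le_mul_of_nonneg_left (hfv m).2 (by positivity)).trans ?_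
      rw [mul_add]
      refine add_le_add le_rfl ?_
      rcases Nat.eq_zero_or_pos m with rfl | hm
      · simpa using hs0
      · have : (m : ℝ) ≠ 0 := by positivity
        rw [← mul_assoc, one_div, inv_mul_cancel₀ this, one_mul]
  intro E E'
  rcases le_total E E' with hE | hE
  · have := key E E' hE
    rw [abs_sub_comm, abs_sub_comm E, abs_of_nonneg (by linarith), abs_of_nonneg (by linarith)]
    linarith
  · have := key E' E hE
    rw [abs_of_nonneg (by linarith), abs_of_nonneg (by linarith)]
    linarith
end
end
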